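/- Under the setting of the PIPG iteration (P symmetric positive semidefinite, D nonempty closed convex, K nonempty closed convex cone, step size α satisfying 0 < α ≤ (8 − 4/γ)/(√(λ² + 16ν²) + λ) for some γ ∈ (1/2, 1), λ ≥ ‖P‖, ν ≥ ‖H‖), let z̄ = lim_{j→∞}(z^j − z^{j−1}) be the limit of consecutive differences of the primal PIPG iterates. If ‖z̄‖ > 0, then z̄ ∈ rec D, H z̄ ∈ K, P z̄ = 0, and ⟨q, z̄⟩ < 0. -/

import Mathlib

open scoped RealInnerProductSpace
open Filter Topology Metric ContinuousLinearMap

/-- Projection onto a set: the unique nearest point, when it exists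
(it exists and is unique for nonempty closed convex sets in Euclidean space). -/
noncomputable def proj {E : Type*} [NormedAddCommGroup E] [InnerProductSpace ℝ E]
    (S : Set E) (x : E) : E :=
  open Classical in
  if h : ∃ y, y ∈ S ∧ ∀ z ∈ S, ‖x - y‖ ≤ ‖x - z‖ then h.choose else 0

/-- The polar cone `K° = {w | ⟪w, y⟫ ≤ 0 for all y ∈ K}`. -/
def polarCone {E : Type*} [NormedAddCommGroup E] [InnerProductSpace ℝ E]
    (K : Set E) : Set E := {w | ∀ y ∈ K, ⟪w, y⟫ ≤ 0}

/-- The recession cone `rec D = {y | y + z ∈ D for all z ∈ D}`. -/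
def recCone {E : Type*} [NormedAddCommGroup E] (D : Set E) : Set E :=
  {y | ∀ z ∈ D, y + z ∈ D}

/-- The normal cone of `D` at `z`: `N_D(z) = {y | ⟪y, z' - z⟫ ≤ 0 for all z' ∈ D}`. -/
def normalCone {E : Type*} [NormedAddCommGroup E] [InnerProductSpace ℝ E]
    (D : Set E) (z : E) : Set E := {y | ∀ z' ∈ D, ⟪y, z' - z⟫ ≤ 0}

section helpers

variable {E F : Type*} [NormedAddCommGroup E] [InnerProductSpace ℝ E]
  [NormedAddCommGroup F] [InnerProductSpace ℝ F]

lemma proj_spec [CompleteSpace E] (S : Set E) (hne : S.Nonempty) (hcl : IsClosed S)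
    (hc : Convex ℝ S) (x : E) :
    proj S x ∈ S ∧ ∀ y ∈ S, ⟪x - proj S x, y - proj S x⟫ ≤ 0 := by
  have hex : ∃ y, y ∈ S ∧ ∀ z ∈ S, ‖x - y‖ ≤ ‖x - z‖ := by
    obtain ⟨y, hy, h⟩ := exists_norm_eq_iInf_of_complete_convex hne hcl.isComplete hc x
    refine ⟨y, hy, fun z hz => ?_⟩
    rw [h]
    exact ciInf_le (f := fun w : S => ‖x - w‖) ⟨0, by rintro _ ⟨w, rfl⟩; positivity⟩ ⟨z, hz⟩
  have hp : proj S x = hex.choose := by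
    unfold _root_.proj; exact dif_pos hex
  have h := hex.choose_spec
  rw [← hp] at h
  refine ⟨h.1, ?_⟩
  rw [← norm_eq_iInf_iff_real_inner_le_zero hc h.1]
  have : Nonempty S := hne.to_subtype
  apply le_antisymm
  · exact le_ciInf fun z => h.2 z z.2
  · exact ciInf_le (f := fun w : S => ‖x - w‖) ⟨0, by rintro _ ⟨w, rfl⟩; positivity⟩ ⟨_, h.1⟩

lemma polar_closed (K : Set E) : IsClosed (polarCone K) := by
  have : polarCone K = ⋂ y ∈ K, {w | ⟪w, y⟫ ≤ 0} := by
    ext w; simp [polarCone]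
  rw [this]
  exact isClosed_biInter fun y _ => isClosed_le (by fun_prop) (by fun_prop)

lemma polar_convex (K : Set E) : Convex ℝ (polarCone K) := by
  intro a ha b hb s t hs ht _ y hy
  rw [inner_add_left, real_inner_smul_left, real_inner_smul_left]
  have := mul_nonpos_of_nonneg_of_nonpos hs (ha y hy)
  have := mul_nonpos_of_nonneg_of_nonpos ht (hb y hy)
  linarith

lemma polar_zero (K : Set E) : (0 : E) ∈ polarCone K := by
  intro y _; simp

lemma polar_smul (K : Set E) (w : E) (hw : w ∈ polarCone K) (a : ℝ) (ha : 0 ≤ a) :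
    a • w ∈ polarCone K := by
  intro y hy
  rw [real_inner_smul_left]
  exact mul_nonpos_of_nonneg_of_nonpos ha (hw y hy)

/-- complementarity for a point of a cone -/
lemma cone_compl (K : Set E) (hKcone : ∀ w ∈ K, ∀ a : ℝ, 0 ≤ a → a • w ∈ K) (r p : E)
    (hp : p ∈ K) (h : ∀ y ∈ K, ⟪r, y - p⟫ ≤ 0) : ⟪r, p⟫ = 0 ∧ ∀ y ∈ K, ⟪r, y⟫ ≤ 0 := by
  have h0 := h _ (hKcone p hp 0 le_rfl)
  have h2 := h _ (hKcone p hp 2 (by norm_num))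
  simp only [inner_sub_right, real_inner_smul_right] at h0 h2
  have h3 : ⟪r, p⟫ = 0 := by linarith
  refine ⟨h3, fun y hy => ?_⟩
  have := h y hy
  rw [inner_sub_right] at this
  linarith

lemma bipolar [CompleteSpace E] (K : Set E) (hne : K.Nonempty) (hcl : IsClosed K)
    (hc : Convex ℝ K) (hKcone : ∀ w ∈ K, ∀ a : ℝ, 0 ≤ a → a • w ∈ K) (r : E)
    (h : ∀ p ∈ polarCone K, ⟪r, p⟫ ≤ 0) : r ∈ K := by
  obtain ⟨h1, h2⟩ := proj_spec K hne hcl hc r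
  obtain ⟨h3, h4⟩ := cone_compl K hKcone _ _ h1 h2
  have h5 := h (r - proj K r) h4
  have h6 : ⟪r - proj K r, r - proj K r⟫ ≤ 0 := by
    rw [inner_sub_right, h3, real_inner_comm]; linarith
  have h7 : r - proj K r = 0 := by
    rw [← inner_self_eq_zero (𝕜 := ℝ)]
    exact le_antisymm h6 real_inner_self_nonneg
  rw [sub_eq_zero] at h7
  rw [h7]; exact h1

lemma step_bound (lam ν γ α : ℝ) (hl : 0 ≤ lam) (hν : 0 ≤ ν) (hγ : 1/2 < γ) (hγ1 : γ < 1)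
    (hα0 : 0 < α) (hα : α ≤ (8 - 4/γ) / (Real.sqrt (lam^2 + 16*ν^2) + lam)) :
    (α * ν)^2 ≤ 1 - α * lam / 2 := by
  set s := Real.sqrt (lam^2 + 16*ν^2) with hs
  have hs0 : 0 ≤ s := Real.sqrt_nonneg _
  have hs2 : s^2 = lam^2 + 16*ν^2 := Real.sq_sqrt (by positivity)
  have hpos : 0 < s + lam := by
    rcases (add_nonneg hs0 hl).lt_or_eq with h | h
    · exact h
    · rw [← h] at hα; simp at hα; linarith
  rw [le_div_iff₀ hpos] at hα
  have h4 : 4 ≤ 4 / γ := by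
    rw [le_div_iff₀ (by linarith)]; linarith
  have h5 : α * (s + lam) ≤ 4 := by linarith
  have h6 : α * s ≤ 4 - α * lam := by linarith
  have h7 : (α * s)^2 ≤ (4 - α * lam)^2 := pow_le_pow_left₀ (by positivity) h6 2
  have h8 : (α * s)^2 = α^2 * (lam^2 + 16*ν^2) := by rw [mul_pow, hs2]
  nlinarith

/-- a bound valid for large increments gives the bound for the averages -/
lemma avg_bound (G : ℕ → ℝ) (A ε : ℝ) (hε : 0 < ε)
    (h : ∀ᶠ i in atTop, G (i + 1) - G i ≤ A) : ∀ᶠ i : ℕ in atTop, G i / i ≤ A + ε := by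
  obtain ⟨N, hN⟩ := eventually_atTop.1 h
  have h1 : ∀ i, G (N + i) ≤ G N + i * A := by
    intro i
    induction i with
    | zero => simp
    | succ i ih =>
      have := hN (N + i) (by omega)
      rw [← add_assoc]; push_cast; linarith
  have h2 : Tendsto (fun i : ℕ => (G N - N * A) / (i : ℝ)) atTop (𝓝 0) :=
    tendsto_const_div_atTop_nhds_zero_nat _
  filter_upwards [h2.eventually_lt_const hε, eventually_ge_atTop N, eventually_gt_atTop 0]
    with i hi hiN hi0
  obtain ⟨k, rfl⟩ := Nat.exists_eq_add_of_le hiN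
  have h3 := h1 k
  have hp : (0 : ℝ) < ((N + k : ℕ) : ℝ) := by exact_mod_cast hi0
  rw [div_lt_iff₀ hp] at hi
  rw [div_le_iff₀ hp]
  push_cast at *
  nlinarith

lemma increment (A B b : F) (i : ℕ) (hi : 0 < i) :
    ‖A‖^2 / ((i + 1 : ℕ) : ℝ) - ‖B‖^2 / i ≤
      2 * ⟪(A - B) - b, (((i + 1 : ℕ) : ℝ)⁻¹) • A⟫ + ‖b‖^2 := by
  have hi' : (0 : ℝ) < i := by exact_mod_cast hi
  have hn : (0 : ℝ) < ((i + 1 : ℕ) : ℝ) := by positivity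
  set n : ℝ := ((i + 1 : ℕ) : ℝ) with hnd
  have hni : n = i + 1 := by rw [hnd]; push_cast; ring
  have h1 : 0 ≤ i * ‖n⁻¹ • A - (i : ℝ)⁻¹ • B‖^2 := by positivity
  have h2 : 0 ≤ ‖b - n⁻¹ • A‖^2 := by positivity
  rw [@norm_sub_sq_real] at h1 h2
  simp only [inner_sub_left, real_inner_smul_right, real_inner_smul_left, norm_smul, mul_pow,
    real_inner_self_eq_norm_sq, Real.norm_eq_abs, sq_abs] at *
  rw [real_inner_comm] at h1
  have h3 : i * ((n⁻¹)^2 * ‖A‖^2 - 2 * ((i:ℝ)⁻¹ * (n⁻¹ * ⟪B, A⟫)) + ((i:ℝ)⁻¹)^2 * ‖B‖^2)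
     = ‖A‖^2 * n⁻¹ - (n⁻¹)^2 * ‖A‖^2 - 2 * (n⁻¹ * ⟪B, A⟫) + ‖B‖^2 / i := by
    rw [hni]; field_simp; ring
  have h4 : i * ((n⁻¹)^2 * ‖A‖^2 - 2 * ((i:ℝ)⁻¹ * (n⁻¹ * ⟪B, A⟫)) + ((i:ℝ)⁻¹)^2 * ‖B‖^2) ≥ 0 := by
    have e := real_inner_comm A B
    first
    | exact h1
  rw [h3] at h4
  rw [div_eq_mul_inv (‖A‖^2)]
  nlinarith

lemma mono_alg (α : ℝ) (P : E →L[ℝ] E) (q : E) (H : E →L[ℝ] F) (z x x' : E) (w y y' r r' : F)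
    (a1 : ⟪-x - α • (P z + q), x'⟫ - α * ⟪w, H x'⟫ ≤ 0)
    (a2 : ⟪-x' - α • (P (z + x) + q), -x'⟫ - α * ⟪w + y, H (-x')⟫ ≤ 0)
    (b1 : ⟪r, y'⟫ ≤ 0) (b2 : 0 ≤ ⟪r', y'⟫)
    (hr : r' = r + (y - y' + α • (H x' + H x' - H x))) :
    (‖x'‖^2 + ‖y'‖^2 - 2 * α * ⟪H x', y'⟫)
      + (‖x - x'‖^2 + ‖y - y'‖^2 - 2 * α * ⟪H (x - x'), y - y'⟫)
      + 2 * α * ⟪P x, x'⟫ ≤ ‖x‖^2 + ‖y‖^2 - 2 * α * ⟪H x, y⟫ := by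
  rw [hr] at b2
  rw [@norm_sub_sq_real, @norm_sub_sq_real]
  simp only [map_add, map_sub, map_neg, inner_add_left, inner_add_right, inner_sub_left,
    inner_sub_right, inner_neg_left, inner_neg_right, real_inner_smul_left,
    real_inner_self_eq_norm_sq] at *
  have e : α * ⟪y, H x'⟫ = α * ⟪H x', y⟫ := by rw [real_inner_comm]
  linarith

lemma raw_alg (α : ℝ) (hα0 : 0 < α) (P : E →L[ℝ] E) (q : E) (H : E →L[ℝ] F)
    (y z x x' s zb : E) (g w w' b : F) (C2 : ℝ)
    (ha : ⟪-x' - α • (P z + q), y - (z + x')⟫ - α * ⟪w', H (y - (z + x'))⟫ ≤ 0)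
    (hb : ⟪w - w' + α • (H (z + x) - g), w'⟫ = 0)
    (hp : -⟪b, w'⟫ + α * ⟪H s, w'⟫ ≤ α * ⟪g - H y, w'⟫)
    (hc2 : -C2 ≤ α * ⟪H zb, w'⟫) (hP : 0 ≤ ⟪P z, z⟫) :
    ⟪x', (z + x') - y⟫ + α * ⟪P z, x' - y⟫
        + α * ⟪q, (z + x') - y⟫ + α * ⟪H (x' - x), w'⟫ - C2
        + ⟪w' - w - b, w'⟫ + α * ⟪H (s - zb), w'⟫ ≤ 0 := by
  have hP' := mul_nonneg hα0.le hP
  rw [real_inner_comm] at ha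
  rw [real_inner_comm (H (y - (z + x'))) w'] at ha
  rw [real_inner_comm] at ha
  simp only [map_add, map_sub, inner_add_left, inner_add_right, inner_sub_left,
    inner_sub_right, inner_neg_left, real_inner_smul_left] at *
  linarith

set_option maxHeartbeats 1000000 in
/-- The core argument in Hilbert spaces. -/
lemma core (α : ℝ) (hα0 : 0 < α) (P : E →L[ℝ] E)
    (hPsym : ∀ x y, ⟪P x, y⟫ = ⟪x, P y⟫) (hPpsd : ∀ x, 0 ≤ ⟪P x, x⟫)
    (q : E) (H : E →L[ℝ] F) (g : F) (D : Set E) (hDcl : IsClosed D) (hDconv : Convex ℝ D)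
    (K : Set F) (hKcl : IsClosed K)
    (hKcone : ∀ w ∈ K, ∀ a : ℝ, 0 ≤ a → a • w ∈ K)
    (lam ν : ℝ) (hlam : ‖P‖ ≤ lam) (hν : ‖H‖ ≤ ν) (hstep : (α * ν)^2 ≤ 1 - α * lam / 2)
    (Z : ℕ → E) (W : ℕ → F) (hZD : ∀ i, Z i ∈ D) (hWK : ∀ i, W i ∈ polarCone K)
    (hA : ∀ i, ∀ y ∈ D, ⟪Z i - Z (i+1) - α • (P (Z i) + q), y - Z (i+1)⟫
        - α * ⟪W i, H (y - Z (i+1))⟫ ≤ 0)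
    (hBK : ∀ i, W i - W (i+1) + α • (H (Z (i+1) + (Z (i+1) - Z i)) - g) ∈ K)
    (hB0 : ∀ i, ⟪W i - W (i+1) + α • (H (Z (i+1) + (Z (i+1) - Z i)) - g), W (i+1)⟫ = 0)
    (zb : E) (hzb : zb ≠ 0) (hlim : Tendsto (fun i => Z (i+1) - Z i) atTop (𝓝 zb)) :
    zb ∈ recCone D ∧ H zb ∈ K ∧ P zb = 0 ∧ ⟪q, zb⟫ < 0 := by
  have hν0 : 0 ≤ ν := (norm_nonneg _).trans hν
  have hl0 : 0 ≤ lam := (norm_nonneg _).trans hlam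
  have hb1 : α * ν ≤ 1 := by
    have : 0 ≤ α * lam / 2 := by positivity
    have h0 : 0 ≤ α * ν := by positivity
    nlinarith
  -- Lyapunov function
  set V : E → F → ℝ := fun x y => ‖x‖^2 + ‖y‖^2 - 2 * α * ⟪H x, y⟫ with hV
  have hHxy : ∀ x y, α * ⟪H x, y⟫ ≤ (α * ν) * (‖x‖ * ‖y‖) := by
    intro x y
    have h1 : ⟪H x, y⟫ ≤ ‖H x‖ * ‖y‖ := real_inner_le_norm _ _
    have h2 : ‖H x‖ ≤ ν * ‖x‖ := (H.le_opNorm x).trans (by gcongr)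
    have h3 : ⟪H x, y⟫ ≤ ν * ‖x‖ * ‖y‖ := h1.trans (by gcongr)
    nlinarith
  have hVlow : ∀ x y, (‖y‖ - (α * ν) * ‖x‖)^2 ≤ V x y := by
    intro x y
    have := hHxy x y
    have h1 : (α * ν)^2 ≤ 1 := by
      have : 0 ≤ α * lam / 2 := by positivity
      linarith
    have h2 : (α * ν)^2 * ‖x‖^2 ≤ 1 * ‖x‖^2 := by gcongr
    simp only [hV]
    nlinarith
  have hV0 : ∀ x y, 0 ≤ V x y := fun x y => (sq_nonneg _).trans (hVlow x y)
  have hVP : ∀ x y, 0 ≤ V x y - α / 2 * ⟪P x, x⟫ := by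
    intro x y
    have h1 := hHxy x y
    have h2 : ⟪P x, x⟫ ≤ lam * ‖x‖^2 := by
      calc ⟪P x, x⟫ ≤ ‖P x‖ * ‖x‖ := real_inner_le_norm _ _
        _ ≤ (lam * ‖x‖) * ‖x‖ := by
          gcongr; exact (P.le_opNorm x).trans (by gcongr)
        _ = lam * ‖x‖^2 := by ring
    have h3 : α / 2 * ⟪P x, x⟫ ≤ α / 2 * (lam * ‖x‖^2) := by gcongr
    have h4 : (α * ν)^2 * ‖x‖^2 ≤ (1 - α * lam / 2) * ‖x‖^2 := by gcongr
    have h5 : 0 ≤ (‖y‖ - (α * ν) * ‖x‖)^2 := sq_nonneg _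
    simp only [hV]
    nlinarith
  set dz : ℕ → E := fun i => Z (i+1) - Z i with hdz
  set dw : ℕ → F := fun i => W (i+1) - W i with hdw
  have hmain : ∀ i, V (dz (i+1)) (dw (i+1)) + V (dz i - dz (i+1)) (dw i - dw (i+1))
      + 2 * α * ⟪P (dz i), dz (i+1)⟫ ≤ V (dz i) (dw i) := by
    intro i
    have a1 := hA i (Z (i+2)) (hZD _)
    have a2 := hA (i+1) (Z (i+1)) (hZD _)
    have b1 := hWK (i+2) _ (hBK i)
    have b2 := hWK (i+1) _ (hBK (i+1))
    have b3 := hB0 i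
    have b4 := hB0 (i+1)
    rw [real_inner_comm] at b1 b2
    refine mono_alg α P q H (Z i) (dz i) (dz (i+1)) (W i) (dw i) (dw (i+1))
      (W i - W (i+1) + α • (H (Z (i+1) + (Z (i+1) - Z i)) - g))
      (W (i+1) - W (i+1+1) + α • (H (Z (i+1+1) + (Z (i+1+1) - Z (i+1))) - g)) ?_ ?_ ?_ ?_ ?_
    · convert a1 using 3
      simp only [hdz]; abel
    · simp only [hdz, hdw]
      convert a2 using 3
      · rw [neg_sub, add_sub_cancel]
      · abel
      · rw [add_sub_cancel, neg_sub]
    · simp only [hdw]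
      rw [inner_sub_right, b3]
      linarith
    · simp only [hdw]
      rw [inner_sub_right, b4]
      linarith
    · simp only [hdw, hdz, map_add, map_sub]
      module
  have hmono : ∀ i, V (dz (i+1)) (dw (i+1)) ≤ V (dz i) (dw i) := by
    intro i
    have h1 := hmain i
    have h2 := hVP (dz i - dz (i+1)) (dw i - dw (i+1))
    have h3 := hPpsd (dz i + dz (i+1))
    have h4 : ⟪P (dz (i+1)), dz i⟫ = ⟪P (dz i), dz (i+1)⟫ := by
      rw [hPsym, real_inner_comm]
    simp only [map_add, map_sub, inner_add_left, inner_add_right, inner_sub_left,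
      inner_sub_right, h4] at h2 h3
    nlinarith
  have hanti : Antitone fun i => V (dz i) (dw i) := antitone_nat_of_succ_le hmono
  have hconv : ∃ l, Tendsto (fun i => V (dz i) (dw i)) atTop (𝓝 l) :=
    ⟨_, tendsto_atTop_ciInf hanti ⟨0, by rintro _ ⟨i, rfl⟩; exact hV0 _ _⟩⟩
  obtain ⟨l, hl⟩ := hconv
  have hlim1 : Tendsto (fun i => dz (i+1)) atTop (𝓝 zb) := hlim.comp (tendsto_add_atTop_nat 1)
  have hlim0 : Tendsto dz atTop (𝓝 zb) := hlim
  -- P zb = 0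
  have hPzz : ⟪P zb, zb⟫ = 0 := by
    apply le_antisymm _ (hPpsd _)
    have t1 : Tendsto (fun i => 2 * α * ⟪P (dz i), dz (i+1)⟫) atTop (𝓝 (2 * α * ⟪P zb, zb⟫)) :=
      (((P.continuous.tendsto _).comp hlim0).inner hlim1).const_mul _
    have t2 : Tendsto (fun i => V (dz i) (dw i) - V (dz (i+1)) (dw (i+1))) atTop (𝓝 (l - l)) :=
      hl.sub (hl.comp (tendsto_add_atTop_nat 1))
    have t3 := le_of_tendsto_of_tendsto' t1 t2 fun i => by
      have := hmain i
      have := hV0 (dz i - dz (i+1)) (dw i - dw (i+1))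
      linarith
    rw [sub_self] at t3
    by_contra hcon
    push Not at hcon
    have : 0 < 2 * α * ⟪P zb, zb⟫ := by positivity
    linarith
  have hPz : P zb = 0 := by
    have h1 : ∀ t : ℝ, 0 ≤ 2 * t * ‖P zb‖^2 + t^2 * ⟪P (P zb), P zb⟫ := by
      intro t
      have := hPpsd (zb + t • P zb)
      simp only [map_add, map_smul, inner_add_left, inner_add_right, real_inner_smul_left,
        real_inner_smul_right, hPzz, hPsym (P zb) zb, real_inner_self_eq_norm_sq] at this
      rw [hPsym (P zb) (P zb)]
      rw [hPsym (P zb) (P zb)] at this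
      nlinarith
    set M := ⟪P (P zb), P zb⟫ with hM
    have hM0 : 0 ≤ M := hPpsd _
    have h2 := h1 (-(1/(M+1)))
    have h3 : 2 * (-(1/(M+1))) * ‖P zb‖^2 + (-(1/(M+1)))^2 * M ≤ 0 ∨ True := Or.inr trivial
    have h4 : ‖P zb‖^2 ≤ 0 := by
      by_contra hcon
      push Not at hcon
      have h5 := h1 (-(‖P zb‖^2/(M+1)))
      have h6 : 2 * -(‖P zb‖^2/(M+1)) * ‖P zb‖^2 + (-(‖P zb‖^2/(M+1)))^2 * M
        = -((‖P zb‖^2)^2 * (M + 2) / (M+1)^2) := by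
        field_simp; ring
      rw [h6] at h5
      have : 0 < (‖P zb‖^2)^2 * (M + 2) / (M+1)^2 := by positivity
      linarith
    have h5 : ‖P zb‖ = 0 := by
      have := sq_nonneg ‖P zb‖
      exact pow_eq_zero_iff (two_ne_zero) |>.1 (le_antisymm h4 this)
    exact norm_eq_zero.1 h5
  -- bounds
  obtain ⟨Cz, hCz⟩ : ∃ C, ∀ i, ‖dz i‖ ≤ C := by
    obtain ⟨C, hC⟩ := hlim0.norm.bddAbove_range
    exact ⟨C, fun i => hC ⟨i, rfl⟩⟩
  obtain ⟨C, hC⟩ : ∃ C, ∀ i, ‖dw i‖ ≤ C := by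
    refine ⟨Real.sqrt (V (dz 0) (dw 0)) + (α * ν) * Cz, fun i => ?_⟩
    have h1 := (hVlow (dz i) (dw i)).trans (hanti (Nat.zero_le i))
    have h2 := Real.le_sqrt_of_sq_le h1
    have h3 : (α * ν) * ‖dz i‖ ≤ (α * ν) * Cz := by gcongr; exact hCz i
    linarith
  have hC0 : 0 ≤ C := (norm_nonneg _).trans (hC 0)
  have hW : ∀ i, ‖W i‖ ≤ ‖W 0‖ + i * C := by
    intro i
    induction i with
    | zero => simp
    | succ i ih =>
      have h1 : W (i+1) = W i + dw i := by simp [hdw]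
      have := norm_add_le (W i) (dw i)
      have := hC i
      rw [h1]; push_cast; linarith
  -- Cesaro
  have hZavg : Tendsto (fun i : ℕ => (i : ℝ)⁻¹ • Z i) atTop (𝓝 zb) := by
    have h1 := hlim0.cesaro_smul
    have h2 : Tendsto (fun i : ℕ => (i : ℝ)⁻¹ • Z 0) atTop (𝓝 ((0:ℝ) • Z 0)) :=
      tendsto_inv_atTop_nhds_zero_nat.smul_const _
    have h3 := h1.add h2
    rw [zero_smul, add_zero] at h3
    refine h3.congr fun i => ?_
    simp only [hdz]
    rw [Finset.sum_range_sub, ← smul_add, sub_add_cancel]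
  have hsmall : ∀ x : ℕ → E, (∃ C, ∀ i, ‖x i‖ ≤ C) →
      Tendsto (fun i : ℕ => (i : ℝ)⁻¹ • x i) atTop (𝓝 0) := by
    rintro x ⟨C, hC⟩
    rw [tendsto_zero_iff_norm_tendsto_zero]
    have h1 : Tendsto (fun i : ℕ => (i : ℝ)⁻¹ * C) atTop (𝓝 (0 * C)) :=
      tendsto_inv_atTop_nhds_zero_nat.mul_const _
    rw [zero_mul] at h1
    refine squeeze_zero (fun _ => norm_nonneg _) (fun i => ?_) h1
    rw [norm_smul, Real.norm_eq_abs, abs_of_nonneg (by positivity)]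
    gcongr; exact hC i
  have hsmallF : ∀ x : ℕ → F, (∃ C, ∀ i, ‖x i‖ ≤ C) →
      Tendsto (fun i : ℕ => (i : ℝ)⁻¹ • x i) atTop (𝓝 0) := by
    rintro x ⟨C, hC⟩
    rw [tendsto_zero_iff_norm_tendsto_zero]
    have h1 : Tendsto (fun i : ℕ => (i : ℝ)⁻¹ * C) atTop (𝓝 (0 * C)) :=
      tendsto_inv_atTop_nhds_zero_nat.mul_const _
    rw [zero_mul] at h1
    refine squeeze_zero (fun _ => norm_nonneg _) (fun i => ?_) h1
    rw [norm_smul, Real.norm_eq_abs, abs_of_nonneg (by positivity)]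
    gcongr; exact hC i
  -- recession
  have hrec : zb ∈ recCone D := by
    intro y hy
    have h1 : Tendsto (fun i : ℕ => (i : ℝ)⁻¹ • Z i - (i : ℝ)⁻¹ • y + y) atTop
        (𝓝 (zb - 0 + y)) :=
      (hZavg.sub (hsmall (fun _ => y) ⟨‖y‖, fun _ => le_rfl⟩)).add tendsto_const_nhds
    rw [sub_zero] at h1
    refine hDcl.mem_of_tendsto h1 ?_
    filter_upwards [eventually_gt_atTop 0] with i hi
    have hi' : (1 : ℝ) ≤ i := by exact_mod_cast hi
    have h2 := hDconv (hZD i) hy (inv_nonneg.2 (by linarith : (0:ℝ) ≤ i))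
      (sub_nonneg.2 (inv_le_one_of_one_le₀ hi')) (by ring)
    rw [sub_smul, one_smul] at h2
    convert h2 using 1
    abel
  -- H zb ∈ K
  have hHK : H zb ∈ K := by
    have h1 : Tendsto (fun i : ℕ => (i : ℝ)⁻¹ •
        (W i - W (i+1) + α • (H (Z (i+1) + (Z (i+1) - Z i)) - g))) atTop (𝓝 (α • H zb)) := by
      have t1 := hsmallF (fun i => - dw i - α • g + (2 * α) • H (dz i))
        ⟨C + ‖α • g‖ + ‖2 * α‖ * (‖H‖ * Cz), fun i => by
          have h1 := norm_add_le (-dw i - α • g) ((2 * α) • H (dz i))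
          have h2 := norm_sub_le (-dw i) (α • g)
          rw [norm_neg] at h2
          have h3 : ‖(2 * α) • H (dz i)‖ ≤ ‖2 * α‖ * (‖H‖ * Cz) := by
            rw [norm_smul]; gcongr
            exact (H.le_opNorm _).trans (by gcongr; exact hCz i)
          have := hC i
          linarith⟩
      have t2 : Tendsto (fun i : ℕ => α • H ((i : ℝ)⁻¹ • Z i)) atTop (𝓝 (α • H zb)) :=
        ((H.continuous.tendsto _).comp hZavg).const_smul α
      have t3 := t1.add t2
      rw [zero_add] at t3
      refine t3.congr fun i => ?_
      simp only [hdz, hdw, map_sub, map_add, map_smul]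
      module
    have h2 : α • H zb ∈ K := hKcl.mem_of_tendsto h1
      (Eventually.of_forall fun i => hKcone _ (hBK i) _ (by positivity))
    have h3 := hKcone _ h2 α⁻¹ (by positivity)
    rwa [smul_smul, inv_mul_cancel₀ hα0.ne', one_smul] at h3
  refine ⟨hrec, hHK, hPz, ?_⟩
  by_contra hcon
  push Not at hcon
  set c := ‖zb‖^2 + α * ⟪q, zb⟫ with hc
  have hcpos : 0 < c := by
    have : 0 < ‖zb‖ := norm_pos_iff.2 hzb
    positivity
  -- lower bound on ⟪W i, H zb⟫
  obtain ⟨C2, hC2⟩ : ∃ C2, ∀ i, -C2 ≤ α * ⟪H zb, W i⟫ := by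
    refine ⟨Cz * ‖zb‖ + α * ⟪q, zb⟫, fun i => ?_⟩
    have h1 := hA i (zb + Z (i+1)) (hrec _ (hZD _))
    have h2 : ⟪dz i, zb⟫ ≤ Cz * ‖zb‖ := (real_inner_le_norm _ _).trans (by gcongr; exact hCz i)
    have h3 : ⟪P (Z i), zb⟫ = 0 := by rw [hPsym, hPz, inner_zero_right]
    simp only [add_sub_cancel_right, inner_sub_left, real_inner_smul_left, inner_add_left, h3,
      real_inner_comm (H zb), hdz] at *
    linarith
  set t : ℕ → ℝ := fun i => ((i + 1 : ℕ) : ℝ)⁻¹ with ht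
  have htpos : ∀ i, 0 < t i := fun i => by simp only [ht]; positivity
  have ht0 : Tendsto t atTop (𝓝 0) :=
    tendsto_inv_atTop_nhds_zero_nat.comp (tendsto_add_atTop_nat 1)
  set U : ℕ → F := fun i => t i • W (i+1) with hU
  set B := ‖W 0‖ + C with hB
  have hUB : ∀ i, ‖U i‖ ≤ B := by
    intro i
    simp only [hU, ht]
    rw [norm_smul, Real.norm_eq_abs, abs_of_nonneg (by positivity), inv_mul_le_iff₀ (by positivity)]
    have := hW (i+1)
    have h0 := norm_nonneg (W 0)
    push_cast at *
    have : (0:ℝ) ≤ i := by positivity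
    simp only [hB]
    nlinarith
  have hB0' : 0 ≤ B := (norm_nonneg _).trans (hUB 0)
  have hX : Tendsto (fun i => t i • Z (i+1)) atTop (𝓝 zb) :=
    hZavg.comp (tendsto_add_atTop_nat 1)
  set G : ℕ → ℝ := fun i => ‖W i‖^2 / i with hG
  have key : ∀ y ∈ D, ∀ (b : F) (s : E) (ε : ℝ), 0 < ε →
      (∀ p ∈ polarCone K, -⟪b, p⟫ + α * ⟪H s, p⟫ ≤ α * ⟪g - H y, p⟫) →
      ∀ᶠ i in atTop, G (i+1) - G i ≤ ‖b‖^2 - 2 * c + 2 * (α * (‖H (s - zb)‖ * B)) + ε := by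
    intro y hy b s ε hε hyb
    have hY : Tendsto (fun i => t i • (Z (i+2) - y)) atTop (𝓝 zb) := by
      have h1 : Tendsto (fun i => t i • dz (i+1)) atTop (𝓝 ((0:ℝ) • zb)) := ht0.smul hlim1
      have h2 : Tendsto (fun i => t i • y) atTop (𝓝 ((0:ℝ) • y)) := ht0.smul_const y
      have h3 := (hX.add h1).sub h2
      rw [zero_smul, zero_smul, add_zero, sub_zero] at h3
      refine h3.congr fun i => ?_
      simp only [hdz]; module
    have hHU : Tendsto (fun i => ⟪H (dz (i+1) - dz i), U i⟫) atTop (𝓝 0) := by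
      have h1 : Tendsto (fun i => ‖H (dz (i+1) - dz i)‖ * B) atTop (𝓝 0) := by
        have := (((H.continuous.tendsto _).comp (hlim1.sub hlim0)).norm).mul_const B
        simpa using this
      refine squeeze_zero_norm (fun i => ?_) h1
      exact (norm_inner_le_norm _ _).trans (by gcongr; exact hUB i)
    have hL : Tendsto (fun i => ⟪dz (i+1), t i • (Z (i+2) - y)⟫
        + α * ⟪P (t i • Z (i+1)), dz (i+1) - y⟫ + α * ⟪q, t i • (Z (i+2) - y)⟫
        + α * ⟪H (dz (i+1) - dz i), U i⟫ - C2 * t i) atTop (𝓝 c) := by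
      have l1 := hlim1.inner (𝕜 := ℝ) hY
      have l2 := ((((P.continuous.tendsto _).comp hX).inner (𝕜 := ℝ)
        (hlim1.sub_const y))).const_mul α
      have l3 := ((tendsto_const_nhds (x := q)).inner (𝕜 := ℝ) hY).const_mul α
      have l := (((l1.add l2).add l3).add (hHU.const_mul α)).sub (ht0.const_mul C2)
      have hcc : ⟪zb, zb⟫ + α * ⟪P zb, zb - y⟫ + α * ⟪q, zb⟫ + α * 0 - C2 * 0 = c := by
        rw [hPz, real_inner_self_eq_norm_sq]; simp [hc]
      rw [hcc] at l
      exact l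
    filter_upwards [hL.eventually_const_lt (show c - ε/2 < c by linarith),
      eventually_gt_atTop 0] with i hi hi0
    have hinc := increment (W (i+1)) (W i) b i hi0
    have hp := hyb (W (i+1)) (hWK _)
    have ha := hA (i+1) y hy
    have hb := hB0 i
    have hs : -(‖H (s - zb)‖ * B) ≤ ⟪H (s - zb), U i⟫ := by
      have := abs_le.1 (abs_real_inner_le_norm (H (s - zb)) (U i))
      have h2 : ‖H (s - zb)‖ * ‖U i‖ ≤ ‖H (s - zb)‖ * B := by gcongr; exact hUB i
      linarith [this.1]
    have hc2 := hC2 (i+1)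
    have hPp := hPpsd (Z (i+1))
    have hsα : -(α * (‖H (s - zb)‖ * B)) ≤ α * ⟪H (s - zb), U i⟫ := by nlinarith
    have hraw : ⟪dz (i+1), Z (i+2) - y⟫ + α * ⟪P (Z (i+1)), dz (i+1) - y⟫
        + α * ⟪q, Z (i+2) - y⟫ + α * ⟪H (dz (i+1) - dz i), W (i+1)⟫ - C2
        + ⟪W (i+1) - W i - b, W (i+1)⟫ + α * ⟪H (s - zb), W (i+1)⟫ ≤ 0 := by
      have e2 : Z (i+2) = Z (i+1) + dz (i+1) := by simp [hdz]
      rw [e2]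
      refine raw_alg α hα0 P q H y (Z (i+1)) (dz i) (dz (i+1)) s zb g (W i) (W (i+1)) b C2
        ?_ hb hp hc2 hPp
      rw [← e2]
      convert ha using 3
      simp only [hdz]; abel
    have hscaled := mul_nonpos_of_nonneg_of_nonpos (htpos i).le hraw
    have hlast : ⟪W (i+1) - W i - b, t i • W (i+1)⟫ ≤ -(c - ε/2) + α * (‖H (s - zb)‖ * B) := by
      simp only [hU, map_smul, real_inner_smul_right, real_inner_smul_left] at *
      nlinarith
    simp only [hG]
    change _ ≤ 2 * ⟪W (i+1) - W i - b, t i • W (i+1)⟫ + ‖b‖^2 at hinc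
    linarith
  -- averages
  have hkey2 : ∀ N : ℕ, 0 < N → ∀ ε : ℝ, 0 < ε → ∀ᶠ i in atTop, G (i+1) - G i ≤
      ‖(N:ℝ)⁻¹ • (W N - W 0)‖^2 - 2 * c
        + 2 * (α * (‖H ((N:ℝ)⁻¹ • (Z N - Z 0) - zb)‖ * B)) + ε := by
    intro N hN ε hε
    have hN' : (0:ℝ) < N := by exact_mod_cast hN
    refine key ((N:ℝ)⁻¹ • ∑ k ∈ Finset.range N, Z (k+1)) ?_ _ _ ε hε ?_
    · rw [Finset.smul_sum]
      refine hDconv.sum_mem (fun _ _ => by positivity) ?_ (fun k _ => hZD _)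
      simp [hN'.ne']
    · intro p hp
      have h1 : ∀ k, -⟪dw k, p⟫ + α * ⟪H (dz k), p⟫ ≤ α * ⟪g, p⟫ - α * ⟪H (Z (k+1)), p⟫ := by
        intro k
        have := hp _ (hBK k)
        rw [real_inner_comm] at this
        simp only [hdw, hdz, map_add, map_sub, inner_add_left, inner_sub_left,
          real_inner_smul_left] at *
        linarith
      have h2 := Finset.sum_le_sum fun k (_ : k ∈ Finset.range N) => h1 k
      rw [← Finset.sum_range_sub W N, ← Finset.sum_range_sub Z N]
      simp only [Finset.sum_add_distrib, Finset.sum_sub_distrib, Finset.sum_neg_distrib,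
        ← Finset.mul_sum, ← sum_inner, ← map_sum, Finset.sum_const, Finset.card_range,
        nsmul_eq_mul] at h2
      simp only [map_smul, inner_sub_left, real_inner_smul_left]
      simp only [hdw, hdz] at h2
      have h3 := mul_le_mul_of_nonneg_left h2 (inv_nonneg.2 hN'.le)
      have h4 : (N:ℝ)⁻¹ * (α * ⟪N • g, p⟫) = α * ⟪g, p⟫ := by
        rw [← Nat.cast_smul_eq_nsmul ℝ, real_inner_smul_left]; field_simp
      rw [mul_sub, h4] at h3
      linarith
  -- the ratio
  set f : ℕ → ℝ := fun i => G i / i with hf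
  have hf0 : ∀ i, 0 ≤ f i := fun i => by simp only [hf, hG]; positivity
  have hdesc : ∀ᶠ N : ℕ in atTop, ∀ᶠ i in atTop, f i ≤ f N - c := by
    have r1 : Tendsto (fun N : ℕ => (N:ℝ)⁻¹ • (Z N - Z 0)) atTop (𝓝 zb) := by
      have := hZavg.sub (hsmall (fun _ => Z 0) ⟨‖Z 0‖, fun _ => le_rfl⟩)
      rw [sub_zero] at this
      exact this.congr fun N => (smul_sub _ _ _).symm
    have r2 : Tendsto (fun N : ℕ => 2 * (α * (‖H ((N:ℝ)⁻¹ • (Z N - Z 0) - zb)‖ * B))) atTop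
        (𝓝 0) := by
      have := ((((H.continuous.tendsto _).comp (r1.sub_const zb)).norm.mul_const B).const_mul
        α).const_mul 2
      simpa using this
    have r3 : Tendsto (fun N : ℕ => (N:ℝ)⁻¹ * (2 * ‖W 0‖ * B + 2 * ‖W 0‖^2)) atTop (𝓝 0) := by
      have := (tendsto_inv_atTop_nhds_zero_nat (𝕜 := ℝ)).mul_const (2 * ‖W 0‖ * B + 2 * ‖W 0‖^2)
      simpa using this
    filter_upwards [r2.eventually_lt_const (show 0 < c/4 by linarith),
      r3.eventually_lt_const (show 0 < c/4 by linarith), eventually_gt_atTop 0] with N h2 h3 hN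
    have h5 := avg_bound G _ (c/4) (by linarith) (hkey2 N hN (c/4) (by linarith))
    have hfN : ‖(N:ℝ)⁻¹ • (W N - W 0)‖^2 ≤ f N + (N:ℝ)⁻¹ * (2 * ‖W 0‖ * B + 2 * ‖W 0‖^2) := by
      obtain ⟨k, rfl⟩ : ∃ k, N = k + 1 := ⟨N - 1, by omega⟩
      have hu := hUB k
      have e1 : f (k+1) = ‖U k‖^2 := by
        simp only [hf, hG, hU, ht]
        rw [norm_smul, mul_pow, Real.norm_eq_abs, sq_abs]; field_simp
      have e2 : ((k+1 : ℕ):ℝ)⁻¹ • (W (k+1) - W 0) = U k - t k • W 0 := by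
        simp only [hU, ht, smul_sub]
      rw [e1, e2]
      change _ ≤ _ + t k * _
      have h6 := norm_sub_le (U k) (t k • W 0)
      rw [norm_smul (t k) (W 0), Real.norm_eq_abs, abs_of_pos (htpos k)] at h6
      have h7 : ‖U k - t k • W 0‖^2 ≤ (‖U k‖ + t k * ‖W 0‖)^2 :=
        pow_le_pow_left₀ (norm_nonneg _) h6 2
      have ht1 : t k ≤ 1 := by
        simp only [ht]; apply inv_le_one_of_one_le₀; push_cast
        linarith [(Nat.cast_nonneg k : (0:ℝ) ≤ k)]
      have h8 : t k * ‖W 0‖ * ‖U k‖ ≤ t k * ‖W 0‖ * B := by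
        have := htpos k
        gcongr
      have h9 : t k * t k * ‖W 0‖^2 ≤ t k * 1 * ‖W 0‖^2 := by
        have := htpos k
        gcongr
      have h10 : 0 ≤ t k * ‖W 0‖^2 := by
        have := htpos k
        positivity
      nlinarith
    filter_upwards [h5] with i hi
    simp only [hf] at *
    linarith
  obtain ⟨N0, hN0⟩ := eventually_atTop.1 hdesc
  have hiter : ∀ k : ℕ, ∃ N ≥ N0, f N ≤ f N0 - k * c := by
    intro k
    induction k with
    | zero => exact ⟨N0, le_rfl, by simp⟩
    | succ k ih =>
      obtain ⟨N, hN, h⟩ := ih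
      obtain ⟨i, hi, hi2⟩ := ((hN0 N hN).and (eventually_ge_atTop N0)).exists
      exact ⟨i, hi2, by push_cast; linarith⟩
  obtain ⟨k, hk⟩ := exists_nat_gt (f N0 / c)
  obtain ⟨N, -, h⟩ := hiter k
  rw [div_lt_iff₀ hcpos] at hk
  linarith [hf0 N]

end helpers

/-- if the limit `z̄` of consecutive differences of the primal PIPG
iterates is nonzero, then `z̄` proves dual infeasibility. -/
theorem stmt7 {n m : ℕ} (α : ℝ)
    (P : EuclideanSpace ℝ (Fin n) →L[ℝ] EuclideanSpace ℝ (Fin n))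
    (hPsa : IsSelfAdjoint P) (hPpsd : ∀ x, 0 ≤ ⟪P x, x⟫)
    (q : EuclideanSpace ℝ (Fin n))
    (H : EuclideanSpace ℝ (Fin n) →L[ℝ] EuclideanSpace ℝ (Fin m))
    (g : EuclideanSpace ℝ (Fin m))
    (D : Set (EuclideanSpace ℝ (Fin n)))
    (hDne : D.Nonempty) (hDcl : IsClosed D) (hDconv : Convex ℝ D)
    (K : Set (EuclideanSpace ℝ (Fin m)))
    (hKne : K.Nonempty) (hKcl : IsClosed K) (hKconv : Convex ℝ K)
    (hKcone : ∀ w ∈ K, ∀ a : ℝ, 0 ≤ a → a • w ∈ K)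
    (w v : ℕ → EuclideanSpace ℝ (Fin m))
    (z : ℕ → EuclideanSpace ℝ (Fin n))
    (hw : ∀ j : ℕ, w (j + 1) = proj (polarCone K) (v j + α • (H (z j) - g)))
    (hz : ∀ j : ℕ, z (j + 1) =
      proj D (z j - α • (P (z j) + q + (ContinuousLinearMap.adjoint H) (w (j + 1)))))
    (hv : ∀ j : ℕ, v (j + 1) = w (j + 1) + α • H (z (j + 1) - z j))
    (γ lam ν : ℝ) (hγ : 1/2 < γ) (hγ1 : γ < 1)
    (hlam : ‖P‖ ≤ lam) (hν : ‖H‖ ≤ ν) (hα0 : 0 < α)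
    (hα : α ≤ (8 - 4/γ) / (Real.sqrt (lam^2 + 16*ν^2) + lam))
    (zbar : EuclideanSpace ℝ (Fin n))
    (hzlim : Tendsto (fun j : ℕ => z (j + 1) - z j) atTop (𝓝 zbar))
    (hzpos : 0 < ‖zbar‖) :
    zbar ∈ recCone D ∧ H zbar ∈ K ∧ P zbar = 0 ∧ ⟪q, zbar⟫ < 0 := by
  have hl0 : 0 ≤ lam := (norm_nonneg _).trans hlam
  have hν0 : 0 ≤ ν := (norm_nonneg _).trans hν
  have hstep := step_bound lam ν γ α hl0 hν0 hγ hγ1 hα0 hα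
  have hPsym : ∀ x y, ⟪P x, y⟫ = ⟪x, P y⟫ := by
    intro x y
    have h := ContinuousLinearMap.adjoint_inner_right P x y
    rw [hPsa.adjoint_eq] at h
    exact h.symm
  have pz := fun j => proj_spec D hDne hDcl hDconv
    (z j - α • (P (z j) + q + (ContinuousLinearMap.adjoint H) (w (j + 1))))
  have pw := fun j => proj_spec (polarCone K) ⟨0, polar_zero K⟩ (polar_closed K) (polar_convex K)
    (v j + α • (H (z j) - g))
  simp only [← hz, ← hw] at pz pw
  have pc := fun j => cone_compl (polarCone K) (polar_smul K) _ _ (pw j).1 (pw j).2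
  have hvw : ∀ i, v (i+2) + α • (H (z (i+2)) - g) - w (i+2+1) = w (i+2) - w (i+1+2)
      + α • (H (z (i+1+1) + (z (i+1+1) - z (i+1))) - g) := by
    intro i
    rw [hv (i+1)]
    simp only [map_add, map_sub]
    module
  refine core α hα0 P hPsym hPpsd q H g D hDcl hDconv K hKcl hKcone lam ν hlam hν hstep
    (fun i => z (i+1)) (fun i => w (i+2)) (fun i => (pz i).1) (fun i => (pw (i+1)).1) ?_ ?_ ?_
    zbar (norm_pos_iff.1 hzpos) (hzlim.comp (tendsto_add_atTop_nat 1))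
  · intro i y hy
    have h := (pz (i+1)).2 y hy
    have e : ⟪w (i+2), H (y - z (i+1+1))⟫ =
        ⟪(ContinuousLinearMap.adjoint H) (w (i+1+1)), y - z (i+1+1)⟫ :=
      (ContinuousLinearMap.adjoint_inner_left H _ _).symm
    simp only [e]
    rw [← real_inner_smul_left, ← inner_sub_left]
    convert h using 2
    module
  · intro i
    have h := bipolar K hKne hKcl hKconv hKcone _ (pc (i+2)).2
    rw [hvw] at h
    exact h
  · intro i
    have h := (pc (i+2)).1
    rw [hvw] at h
    exact h
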